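/- Let m ≥ 3 be an odd integer and let p be a real number with 2m ≤ p < ∞. If D > 0 is such that for every n ≥ 1 and every m-homogeneous polynomial P(x) = ∑_{|α|=m} a_α x^α on the real space ℓ_p^n one has (∑_{|α|=m} |a_α|^{2mp/(mp+p−2m)})^{(mp+p−2m)/(2mp)} ≤ D·‖P‖, then D ≥ 2^{(mp+p−2m)(m−1)/(4mp)} · ((m−1)/2)^{(m−1)/p}. -/

import Mathlib

open Finset

/-- The `ℓ_p` norm on `ℝ^n` for a real exponent `p`. -/
noncomputable def lpNorm {n : ℕ} (p : ℝ) (x : Fin n → ℝ) : ℝ :=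
  (∑ i, |x i| ^ p) ^ (1 / p)

/-- The sup norm of the `m`-homogeneous polynomial with coefficients `a`
over the unit ball of the real space `ℓ_p^n`. -/
noncomputable def polyNorm (p : ℝ) (m n : ℕ) (a : (Fin n → ℕ) → ℝ) : ℝ :=
  sSup {y : ℝ | ∃ x : Fin n → ℝ, lpNorm p x ≤ 1 ∧
    y = |∑ α ∈ Finset.Nat.antidiagonalTuple n m, a α * ∏ i, x i ^ α i|}

/-!
For `m = 2k + 1` the extremal candidate is `P = z ∏ᵢ (uᵢ² - vᵢ²)` in the `m` variables `z, uᵢ, vᵢ`.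
Expanding the product gives `2 ^ k` distinct monomials with coefficients `±1`, so the `ℓ_q` norm
of the coefficients is `2 ^ (k / q)`. On the unit ball `|z| ≤ 1`, and
`|uᵢ² - vᵢ²| ≤ tᵢ ^ (2 / p)` with `tᵢ = |uᵢ| ^ p + |vᵢ| ^ p`; since `∑ tᵢ ≤ 1`, the AM-GM inequality
gives `‖P‖ ≤ k ^ (-2k / p)`.
-/

section FiniteSums

variable {ι κ M N : Type*}

lemma sum_apply_extend_zero [Fintype ι] [Zero M] [AddCommMonoid N] {E : ι → κ}
    (hE : Function.Injective E) {t : Finset κ} (hEt : ∀ i, E i ∈ t) (c : ι → M) {F : κ → M → N}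
    (hF : ∀ α, F α 0 = 0) :
    ∑ α ∈ t, F α (Function.extend E c 0 α) = ∑ i, F (E i) (c i) := by
  refine (sum_of_injOn E hE.injOn (fun i _ => hEt i) (fun α _ hα => ?_) fun i _ => ?_).symm
  · have hα' : ¬∃ i, E i = α := by simpa using hα
    rw [Function.extend_apply' _ _ _ hα', Pi.zero_apply, hF]
  · rw [hE.extend_apply]

lemma prod_le_sum_div_card_pow_card (s : Finset ι) {f : ι → ℝ} (hf : ∀ i ∈ s, 0 ≤ f i) :
    ∏ i ∈ s, f i ≤ ((∑ i ∈ s, f i) / s.card) ^ s.card := by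
  rcases s.eq_empty_or_nonempty with rfl | hs
  · simp
  have hcard : 0 < s.card := hs.card_pos
  have amgm : (∏ i ∈ s, f i) ^ (s.card : ℝ)⁻¹ ≤ (∑ i ∈ s, f i) / s.card := by
    simpa using Real.geom_mean_le_arith_mean s (fun _ => 1) f (by simp) (by simpa using hs) hf
  have hprod : 0 ≤ ∏ i ∈ s, f i := prod_nonneg hf
  calc ∏ i ∈ s, f i = ((∏ i ∈ s, f i) ^ (s.card : ℝ)⁻¹) ^ s.card :=
        (Real.rpow_inv_natCast_pow hprod hcard.ne').symm
    _ ≤ _ := by gcongr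

end FiniteSums

section PolyNorm

variable {n : ℕ} {p : ℝ}

lemma lpNorm_le_one_iff (hp : 0 < p) (x : Fin n → ℝ) : lpNorm p x ≤ 1 ↔ ∑ i, |x i| ^ p ≤ 1 := by
  have hsum : 0 ≤ ∑ i, |x i| ^ p := by positivity
  rw [lpNorm, ← Real.rpow_le_rpow_iff hsum zero_le_one (one_div_pos.2 hp), Real.one_rpow]

lemma polyNorm_nonneg (p : ℝ) (m n : ℕ) (a : (Fin n → ℕ) → ℝ) : 0 ≤ polyNorm p m n a := by
  refine Real.sSup_nonneg ?_
  rintro _ ⟨x, -, rfl⟩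
  exact abs_nonneg _

end PolyNorm

section Estimate

variable {p : ℝ}

lemma abs_sq_sub_sq_le_rpow (hp : 0 < p) (u v : ℝ) :
    |u ^ 2 - v ^ 2| ≤ (|u| ^ p + |v| ^ p) ^ (2 / p) := by
  have sq_eq (a : ℝ) : a ^ 2 = (|a| ^ p) ^ (2 / p) := by
    rw [← Real.rpow_mul (abs_nonneg a), mul_div_cancel₀ _ hp.ne', Real.rpow_two, sq_abs]
  refine abs_sub_le_of_nonneg_of_le (sq_nonneg u) ?_ (sq_nonneg v) ?_
  · rw [sq_eq u]
    gcongr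
    exact le_add_of_nonneg_right (by positivity)
  · rw [sq_eq v]
    gcongr
    exact le_add_of_nonneg_left (by positivity)

lemma abs_mul_prod_sq_sub_sq_le {ι : Type*} [Fintype ι] (hp : 0 < p) {z : ℝ} {u v : ι → ℝ}
    (h : |z| ^ p + ∑ i, (|u i| ^ p + |v i| ^ p) ≤ 1) :
    |z * ∏ i, (u i ^ 2 - v i ^ 2)| ≤
      ((Fintype.card ι : ℝ) ^ (2 * Fintype.card ι / p : ℝ))⁻¹ := by
  set t : ι → ℝ := fun i => |u i| ^ p + |v i| ^ p
  have ht (i : ι) : 0 ≤ t i := by positivity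
  have ht_sum : ∑ i, t i ≤ 1 := by linarith [Real.rpow_nonneg (abs_nonneg z) p]
  have hz : |z| ≤ 1 := by
    have : |z| ^ p ≤ 1 := by linarith [sum_nonneg fun i (_ : i ∈ univ) => ht i]
    exact (Real.rpow_le_rpow_iff (abs_nonneg z) zero_le_one hp).1 (by rwa [Real.one_rpow])
  have ht_prod : ∏ i, t i ≤ (1 / Fintype.card ι : ℝ) ^ Fintype.card ι :=
    (prod_le_sum_div_card_pow_card univ fun i _ => ht i).trans (by
      rw [card_univ]
      gcongr)
  calc |z * ∏ i, (u i ^ 2 - v i ^ 2)|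
      = |z| * ∏ i, |u i ^ 2 - v i ^ 2| := by rw [abs_mul, abs_prod]
    _ ≤ 1 * ∏ i, t i ^ (2 / p) := by
        gcongr
        exact abs_sq_sub_sq_le_rpow hp _ _
    _ = (∏ i, t i) ^ (2 / p) := by rw [one_mul, Real.finsetProd_rpow _ _ fun i _ => ht i]
    _ ≤ ((1 / Fintype.card ι : ℝ) ^ Fintype.card ι) ^ (2 / p) := by
        gcongr
    _ = ((Fintype.card ι : ℝ) ^ (2 * Fintype.card ι / p : ℝ))⁻¹ := by
        rw [← Real.rpow_natCast, ← Real.rpow_mul (by positivity), one_div,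
          Real.inv_rpow (Nat.cast_nonneg _)]
        congr 2
        ring

end Estimate

section SquareDifferences

variable {k n : ℕ}

/-- The exponent of the monomial `z ∏ᵢ wᵢ²` of `z ∏ᵢ (uᵢ² - vᵢ²)` in which `wᵢ = uᵢ` if `s i` holds
and `wᵢ = vᵢ` otherwise. The bijection `e` numbers the variables: `none` stands for `z`,
`some (i, true)` for `uᵢ` and `some (i, false)` for `vᵢ`. -/
def choiceExponent (e : Option (Fin k × Bool) ≃ Fin n) (s : Fin k → Bool) : Fin n → ℕ :=
  fun j => (e.symm j).elim 1 fun w => if s w.1 = w.2 then 2 else 0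

/-- The coefficient `±1` of the monomial with exponent `choiceExponent e s` in
`z ∏ᵢ (uᵢ² - vᵢ²)`: each choice of a `vᵢ` contributes a factor `-1`. -/
def choiceSign (s : Fin k → Bool) : ℝ :=
  ∏ i, if s i then 1 else -1

/-- The coefficients of the polynomial `z ∏ᵢ (uᵢ² - vᵢ²)` of degree `2k + 1`, as a function of the
exponent; the bijection `e` numbers the variables as in `choiceExponent`. -/
noncomputable def sqDiffCoeff (e : Option (Fin k × Bool) ≃ Fin n) : (Fin n → ℕ) → ℝ :=
  Function.extend (choiceExponent e) choiceSign 0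

lemma abs_choiceSign (s : Fin k → Bool) : |choiceSign s| = 1 := by
  rw [choiceSign, abs_prod]
  exact prod_eq_one fun i _ => by split_ifs <;> simp

variable (e : Option (Fin k × Bool) ≃ Fin n)

lemma choiceExponent_injective : Function.Injective (choiceExponent e) := by
  intro s t hst
  funext i
  by_contra hne
  simpa [choiceExponent, hne] using congrFun hst (e (some (i, t i)))

lemma choiceExponent_mem_antidiagonalTuple (s : Fin k → Bool) :
    choiceExponent e s ∈ Finset.Nat.antidiagonalTuple n (2 * k + 1) := by
  rw [Finset.Nat.mem_antidiagonalTuple, ← e.sum_comp]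
  simp [choiceExponent, Fintype.sum_option, Fintype.sum_prod_type, add_comm, mul_comm]

lemma prod_pow_choiceExponent (x : Fin n → ℝ) (s : Fin k → Bool) :
    ∏ j, x j ^ choiceExponent e s j = x (e none) * ∏ i, x (e (some (i, s i))) ^ 2 := by
  rw [← e.prod_comp]
  simp [choiceExponent, Fintype.prod_option, Fintype.prod_prod_type, pow_ite]

lemma prod_sq_sub_sq_eq_sum_choiceSign (w : Fin k → Bool → ℝ) :
    ∏ i, (w i true ^ 2 - w i false ^ 2) =
      ∑ s : Fin k → Bool, choiceSign s * ∏ i, w i (s i) ^ 2 := by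
  have factor (i : Fin k) : w i true ^ 2 - w i false ^ 2 =
      ∑ b : Bool, (if b then 1 else -1) * w i b ^ 2 := by
    simp [sub_eq_add_neg]
  simp only [factor, prod_univ_sum, Fintype.piFinset_univ, prod_mul_distrib,
    choiceSign]

lemma sum_sqDiffCoeff_mul_prod_pow (x : Fin n → ℝ) :
    ∑ α ∈ Finset.Nat.antidiagonalTuple n (2 * k + 1), sqDiffCoeff e α * ∏ j, x j ^ α j =
      x (e none) * ∏ i, (x (e (some (i, true))) ^ 2 - x (e (some (i, false))) ^ 2) := by
  rw [prod_sq_sub_sq_eq_sum_choiceSign fun i b => x (e (some (i, b))), mul_sum]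
  calc _ = ∑ s, choiceSign s * ∏ j, x j ^ choiceExponent e s j :=
        sum_apply_extend_zero (choiceExponent_injective e)
          (choiceExponent_mem_antidiagonalTuple e) choiceSign
          (F := fun α c => c * ∏ j, x j ^ α j) fun _ => zero_mul _
    _ = _ := sum_congr rfl fun s _ => by rw [prod_pow_choiceExponent, mul_left_comm]

lemma sum_abs_sqDiffCoeff_rpow {q : ℝ} (hq : q ≠ 0) :
    ∑ α ∈ Finset.Nat.antidiagonalTuple n (2 * k + 1), |sqDiffCoeff e α| ^ q = 2 ^ k := by
  calc _ = ∑ s : Fin k → Bool, |choiceSign s| ^ q :=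
        sum_apply_extend_zero (choiceExponent_injective e)
          (choiceExponent_mem_antidiagonalTuple e) choiceSign
          (F := fun _ c => |c| ^ q) fun _ => by rw [abs_zero, Real.zero_rpow hq]
    _ = 2 ^ k := by simp [abs_choiceSign]

lemma polyNorm_sqDiffCoeff_le {p : ℝ} (hp : 0 < p) :
    polyNorm p (2 * k + 1) n (sqDiffCoeff e) ≤ ((k : ℝ) ^ (2 * k / p : ℝ))⁻¹ := by
  refine Real.sSup_le ?_ (by positivity)
  rintro _ ⟨x, hx, rfl⟩
  rw [lpNorm_le_one_iff hp, ← e.sum_comp] at hx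
  simp only [Fintype.sum_option, Fintype.sum_prod_type, Fintype.sum_bool] at hx
  rw [sum_sqDiffCoeff_mul_prod_pow]
  simpa only [Fintype.card_fin] using abs_mul_prod_sq_sub_sq_le hp hx

end SquareDifferences

theorem real_HL_lower_bound_odd_general {m : ℕ} (hmo : Odd m) {p q : ℝ} (hp : 0 < p) (hq : 0 < q)
    {D : ℝ}
    (h : ∀ a : (Fin m → ℕ) → ℝ,
      (∑ α ∈ Finset.Nat.antidiagonalTuple m m, |a α| ^ q) ^ q⁻¹ ≤ D * polyNorm p m m a) :
    2 ^ (((m : ℝ) - 1) / 2 * q⁻¹) * (((m : ℝ) - 1) / 2) ^ (((m : ℝ) - 1) / p) ≤ D := by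
  obtain ⟨k, rfl⟩ := hmo
  have hk : ((2 * k + 1 : ℕ) : ℝ) - 1 = 2 * k := by push_cast; ring
  rw [hk, mul_div_cancel_left₀ _ two_ne_zero]
  let e : Option (Fin k × Bool) ≃ Fin (2 * k + 1) :=
    Fintype.equivFinOfCardEq (by simp [mul_comm])
  set K : ℝ := (k : ℝ) ^ (2 * k / p : ℝ)
  set A := polyNorm p (2 * k + 1) (2 * k + 1) (sqDiffCoeff e)
  have hcoeff : (2 : ℝ) ^ (k * q⁻¹) ≤ D * A := by
    simpa only [sum_abs_sqDiffCoeff_rpow e hq.ne', ← Real.rpow_natCast_mul zero_le_two]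
      using h (sqDiffCoeff e)
  have hD : 0 < D :=
    pos_of_mul_pos_left ((by positivity : (0 : ℝ) < 2 ^ (k * q⁻¹)).trans_le hcoeff)
      (polyNorm_nonneg ..)
  calc (2 : ℝ) ^ (k * q⁻¹) * K ≤ D * A * K := by gcongr
    _ ≤ D * K⁻¹ * K := by gcongr; exact polyNorm_sqDiffCoeff_le e hp
    _ = D * (K⁻¹ * K) := mul_assoc ..
    _ ≤ D := mul_le_of_le_one_right hD.le inv_mul_le_one

/-- For odd `m ≥ 3` and `2m ≤ p < ∞`, any constant `D` for the real
polynomial Hardy–Littlewood inequality satisfies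
`D ≥ 2^{(mp+p-2m)(m-1)/(4mp)} ((m-1)/2)^{(m-1)/p}`. -/
theorem real_HL_lower_bound_odd (m : ℕ) (hm : 3 ≤ m) (hmo : Odd m)
    (p : ℝ) (hp : 2 * (m : ℝ) ≤ p) (D : ℝ) (hD : 0 < D)
    (h : ∀ n : ℕ, 1 ≤ n → ∀ a : (Fin n → ℕ) → ℝ,
      (∑ α ∈ Finset.Nat.antidiagonalTuple n m, |a α|
          ^ (2 * (m : ℝ) * p / ((m : ℝ) * p + p - 2 * m)))
        ^ (((m : ℝ) * p + p - 2 * m) / (2 * (m : ℝ) * p)) ≤ D * polyNorm p m n a) :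
    2 ^ ((((m : ℝ) * p + p - 2 * m) * ((m : ℝ) - 1)) / (4 * (m : ℝ) * p)) *
      (((m : ℝ) - 1) / 2) ^ (((m : ℝ) - 1) / p) ≤ D := by
  have hm0 : (0 : ℝ) < m := by exact_mod_cast hmo.pos
  have hp0 : 0 < p := by linarith
  have hden : 0 < (m : ℝ) * p + p - 2 * m := by linarith [mul_pos hm0 hp0]
  have hq : 0 < 2 * (m : ℝ) * p / ((m : ℝ) * p + p - 2 * m) := by positivity
  have hbound := real_HL_lower_bound_odd_general hmo hp0 hq
    fun a => by simpa only [inv_div] using h m hmo.pos a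
  convert hbound using 3
  field_simp
  ring
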